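/- Let Q_ρ(z₀) = B_ρ(x₀) × (t₀−ρ^p, t₀+ρ^p) ⊂ ℝ^{n+1}, let u ∈ L¹(Q_ρ(z₀)) and F ∈ L¹(Q_ρ(z₀), ℝ^n) satisfy ∂_t u = div F in the distributional sense in Q_ρ(z₀). Then there exists a radius ρ̂ ∈ (ρ/2, ρ) such that for a.e. t₁, t₂ ∈ (t₀−ρ^p, t₀+ρ^p) one has |(u)_{x₀,ρ̂}(t₂) − (u)_{x₀,ρ̂}(t₁)| ≤ 2^{n+2} ρ^{p−1} ⨍⨍_{Q_ρ(z₀)} |F| dx dt, where (u)_{x₀,r}(t) denotes the mean value of u(·,t) over B_r(x₀). -/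

import Mathlib

open MeasureTheory Set Metric
open scoped ENNReal

noncomputable section

/-- Smooth test functions compactly supported in the space-time cylinder `I ×ˢ Ω`. -/
def IsTestFun {n : ℕ} (Ω : Set (EuclideanSpace ℝ (Fin n))) (I : Set ℝ)
    (φ : ℝ → EuclideanSpace ℝ (Fin n) → ℝ) : Prop :=
  ContDiff ℝ (⊤ : ℕ∞) (fun q : ℝ × EuclideanSpace ℝ (Fin n) => φ q.1 q.2) ∧
  HasCompactSupport (fun q : ℝ × EuclideanSpace ℝ (Fin n) => φ q.1 q.2) ∧
  tsupport (fun q : ℝ × EuclideanSpace ℝ (Fin n) => φ q.1 q.2) ⊆ I ×ˢ Ω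

/-!
Testing the equation with `η(t) ζ(x)` shows that, for a fixed cutoff `ζ`, the function
`t ↦ ∫ ζ u(t)` satisfies `|∫ η' (∫ ζ u)| ≤ ∫∫ |∇ζ| |F|` for all test functions `|η| ≤ 1`, hence has
essential oscillation at most `∫∫ |∇ζ| |F|`. For a radial cutoff between `B_a` and `B_b` this is at
most about `(G b - G a) / (b - a)`, where `G s` is the integral of `|F|` over the cylinder of
radius `s`. As in the mean value theorem, there is a radius `r ∈ (σ, ρ)` near which arbitrarily
short secants of `G` are no steeper than `(G ρ - G σ) / (ρ - σ)`; letting `a, b → r` along them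
replaces `ζ` by the indicator function of `B_r`.
-/

open Filter Topology
open scoped ContDiff

section SmoothStep

/-- The primitive of a normalized bump function: a smooth step from `0` to `1`, used both to
mollify indicator functions of time intervals and to build radial cutoff functions. -/
def bumpStep (ψ : ContDiffBump (0 : ℝ)) (s : ℝ) : ℝ :=
  ∫ v in (-ψ.rOut)..s, ψ.normed volume v

variable (ψ : ContDiffBump (0 : ℝ)) {s : ℝ}

lemma hasDerivAt_bumpStep (s : ℝ) : HasDerivAt (bumpStep ψ) (ψ.normed volume s) s :=
  (ψ.continuous_normed.integral_hasStrictDerivAt _ _).hasDerivAt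

lemma deriv_bumpStep : deriv (bumpStep ψ) = ψ.normed volume :=
  funext fun s => (hasDerivAt_bumpStep ψ s).deriv

lemma differentiable_bumpStep : Differentiable ℝ (bumpStep ψ) :=
  fun s => (hasDerivAt_bumpStep ψ s).differentiableAt

lemma contDiff_bumpStep : ContDiff ℝ ∞ (bumpStep ψ) :=
  contDiff_infty_iff_deriv.2 ⟨differentiable_bumpStep ψ, deriv_bumpStep ψ ▸ ψ.contDiff_normed⟩

lemma monotone_bumpStep : Monotone (bumpStep ψ) :=
  monotone_of_deriv_nonneg (differentiable_bumpStep ψ) fun s => by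
    rw [deriv_bumpStep]
    exact ψ.nonneg_normed s

lemma bumpStep_eq_one (hs : ψ.rOut ≤ s) : bumpStep ψ s = 1 := by
  rw [bumpStep, intervalIntegral.integral_eq_integral_of_support_subset, ψ.integral_normed]
  rw [ψ.support_normed_eq, Real.ball_eq_Ioo, zero_sub, zero_add]
  exact Ioo_subset_Ioc_self.trans (Ioc_subset_Ioc_right hs)

lemma bumpStep_eq_zero (hs : s ≤ -ψ.rOut) : bumpStep ψ s = 0 := by
  refine intervalIntegral.integral_zero_ae (ae_of_all _ fun v hv => ?_)
  rw [uIoc_of_ge hs] at hv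
  rw [← Function.notMem_support, ψ.support_normed_eq, Real.ball_eq_Ioo, zero_sub]
  exact fun h => h.1.not_ge hv.2

lemma bumpStep_mem_Icc (s : ℝ) : bumpStep ψ s ∈ Icc (0 : ℝ) 1 := by
  constructor
  · rw [← bumpStep_eq_zero ψ (min_le_right s (-ψ.rOut))]
    exact monotone_bumpStep ψ (min_le_left _ _)
  · rw [← bumpStep_eq_one ψ (le_max_right s ψ.rOut)]
    exact monotone_bumpStep ψ (le_max_left _ _)

lemma lipschitzWith_bumpStep {c : ℝ} (hψ : ψ.rOut ≤ c * ψ.rIn) :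
    LipschitzWith (c / (2 * ψ.rOut)).toNNReal (bumpStep ψ) := by
  refine lipschitzWith_of_nnnorm_deriv_le (differentiable_bumpStep ψ) fun s => ?_
  rw [deriv_bumpStep, ← norm_toNNReal, Real.norm_of_nonneg (ψ.nonneg_normed s)]
  refine Real.toNNReal_le_toNNReal ?_
  simpa [ψ.rOut_pos.le] using ψ.normed_le_div_measure_closedBall_rOut volume c hψ s

lemma exists_smooth_step {a b c : ℝ} (hab : a < b) (hc : 1 < c) :
    ∃ χ : ℝ → ℝ, ContDiff ℝ ∞ χ ∧ (∀ s, χ s ∈ Icc (0 : ℝ) 1) ∧ (∀ s ≤ a, χ s = 0) ∧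
      (∀ s, b ≤ s → χ s = 1) ∧ LipschitzWith (c / (b - a)).toNNReal χ := by
  have hba : 0 < b - a := sub_pos.2 hab
  let ψ : ContDiffBump (0 : ℝ) :=
    ⟨(b - a) / 2 / c, (b - a) / 2, div_pos (half_pos hba) (one_pos.trans hc),
      div_lt_self (half_pos hba) hc⟩
  have hψ : ψ.rOut = (b - a) / 2 := rfl
  refine ⟨fun s => bumpStep ψ (s - (a + b) / 2),
    (contDiff_bumpStep ψ).comp (contDiff_id.sub contDiff_const), fun s => bumpStep_mem_Icc ψ _,
    fun s hs => bumpStep_eq_zero ψ (by linarith), fun s hs => bumpStep_eq_one ψ (by linarith), ?_⟩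
  have hstep := lipschitzWith_bumpStep ψ (c := c) (mul_div_cancel₀ _ (by positivity)).ge
  rw [hψ, mul_div_cancel₀ _ two_ne_zero] at hstep
  have hshift : LipschitzWith 1 fun s => s - (a + b) / 2 :=
    (IsometryEquiv.subRight ((a + b) / 2)).isometry.lipschitz
  exact mul_one (c / (b - a)).toNNReal ▸ hstep.comp hshift

/-- A mollification of the indicator function of the interval between `t₁` and `t₂`, with sign `+`
if `t₁ < t₂` and `-` if `t₂ < t₁`. -/
def bumpInterval (t₁ t₂ t : ℝ) : ℝ :=
  bumpStep ψ (t₂ - t) - bumpStep ψ (t₁ - t)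

variable (t₁ t₂ : ℝ)

lemma deriv_bumpInterval (t : ℝ) :
    deriv (bumpInterval ψ t₁ t₂) t = ψ.normed volume (t₁ - t) - ψ.normed volume (t₂ - t) := by
  have hstep (τ : ℝ) :
      HasDerivAt (fun t => bumpStep ψ (τ - t)) (-ψ.normed volume (τ - t)) t :=
    (hasDerivAt_bumpStep ψ (τ - t)).comp_const_sub τ t
  rw [← neg_sub_neg]
  exact ((hstep t₂).sub (hstep t₁)).deriv

lemma contDiff_bumpInterval : ContDiff ℝ ∞ (bumpInterval ψ t₁ t₂) :=
  ((contDiff_bumpStep ψ).comp (contDiff_const.sub contDiff_id)).sub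
    ((contDiff_bumpStep ψ).comp (contDiff_const.sub contDiff_id))

lemma abs_bumpInterval_le_one (t : ℝ) : |bumpInterval ψ t₁ t₂ t| ≤ 1 :=
  Real.dist_le_of_mem_Icc_01 (bumpStep_mem_Icc ψ (t₂ - t)) (bumpStep_mem_Icc ψ (t₁ - t))

lemma support_bumpInterval_subset :
    Function.support (bumpInterval ψ t₁ t₂) ⊆
      Icc (min t₁ t₂ - ψ.rOut) (max t₁ t₂ + ψ.rOut) := by
  refine Function.support_subset_iff'.2 fun t ht => ?_
  rw [mem_Icc, not_and_or, not_le, not_le] at ht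
  rcases ht with ht | ht
  · have h₁ := min_le_left t₁ t₂
    have h₂ := min_le_right t₁ t₂
    rw [bumpInterval, bumpStep_eq_one ψ (by linarith), bumpStep_eq_one ψ (by linarith), sub_self]
  · have h₁ := le_max_left t₁ t₂
    have h₂ := le_max_right t₁ t₂
    rw [bumpInterval, bumpStep_eq_zero ψ (by linarith), bumpStep_eq_zero ψ (by linarith), sub_self]

end SmoothStep

section EssentialOscillation

lemma exists_seq_contDiffBump_rOut_tendsto_zero (E : Type*) [NormedAddCommGroup E] :
    ∃ ψ : ℕ → ContDiffBump (0 : E), Tendsto (fun k => (ψ k).rOut) atTop (𝓝 0) ∧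
      ∀ k, (ψ k).rOut ≤ 2 * (ψ k).rIn :=
  ⟨fun k => ⟨1 / (k + 1) / 2, 1 / (k + 1), by positivity, half_lt_self (by positivity)⟩,
    tendsto_one_div_add_atTop_nhds_zero_nat, fun _ => (mul_div_cancel₀ _ two_ne_zero).ge⟩

section Mollification

variable {E : Type*} [NormedAddCommGroup E] [InnerProductSpace ℝ E] [FiniteDimensional ℝ E]
  [MeasurableSpace E] [BorelSpace E] {μ : Measure E} [μ.IsAddHaarMeasure] {s : Set E} {f : E → ℝ}

lemma integrableOn_normed_sub_mul (hf : IntegrableOn f s μ) (ψ : ContDiffBump (0 : E)) (x : E) :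
    IntegrableOn (fun y => ψ.normed μ (x - y) * f y) s μ := by
  obtain ⟨C, hC⟩ :=
    ψ.continuous_normed.bounded_above_of_compact_support (ψ.hasCompactSupport_normed (μ := μ))
  exact Integrable.bdd_mul hf
    (ψ.continuous_normed.comp (continuous_const.sub continuous_id)).aestronglyMeasurable
    (ae_of_all _ fun y => hC (x - y))

lemma ae_tendsto_setIntegral_normed_sub_mul (hs : MeasurableSet s) (hf : IntegrableOn f s μ)
    {ι : Type*} {l : Filter ι} {ψ : ι → ContDiffBump (0 : E)} {K : ℝ}
    (hψ : Tendsto (fun i => (ψ i).rOut) l (𝓝 0)) (hK : ∀ i, (ψ i).rOut ≤ K * (ψ i).rIn) :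
    ∀ᵐ x ∂(μ.restrict s),
      Tendsto (fun i => ∫ y in s, (ψ i).normed μ (x - y) * f y ∂μ) l (𝓝 (f x)) := by
  have hconv := ContDiffBump.ae_convolution_tendsto_right_of_locallyIntegrable (μ := μ) hψ
    (Eventually.of_forall hK) (hf.integrable_indicator hs).locallyIntegrable
  filter_upwards [ae_restrict_of_ae hconv, ae_restrict_mem hs] with x hx hxs
  rw [indicator_of_mem hxs] at hx
  refine hx.congr fun i => ?_
  rw [convolution_lsmul_swap, ← integral_indicator hs]
  simp only [smul_eq_mul, indicator_mul_right]

end Mollification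

/-- Hypothesis `h` says in dual form that the total variation of `V` on `I` is at most `M`. -/
lemma ae_ae_abs_sub_le_of_forall_abs_integral_deriv_mul_le {I : Set ℝ} (hI : IsOpen I)
    [I.OrdConnected] {V : ℝ → ℝ} (hV : IntegrableOn V I) {M : ℝ}
    (h : ∀ η : ℝ → ℝ, ContDiff ℝ ∞ η → HasCompactSupport η → tsupport η ⊆ I →
      (∀ t, |η t| ≤ 1) → |∫ t in I, deriv η t * V t| ≤ M) :
    ∀ᵐ t₁ ∂(volume.restrict I), ∀ᵐ t₂ ∂(volume.restrict I), |V t₂ - V t₁| ≤ M := by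
  obtain ⟨ψ, hψ, hψ2⟩ := exists_seq_contDiffBump_rOut_tendsto_zero ℝ
  have hmain : ∀ᵐ τ ∂(volume.restrict I), τ ∈ I ∧
      Tendsto (fun k => ∫ t in I, (ψ k).normed volume (τ - t) * V t) atTop (𝓝 (V τ)) :=
    (ae_restrict_mem hI.measurableSet).and
      (ae_tendsto_setIntegral_normed_sub_mul hI.measurableSet hV hψ hψ2)
  filter_upwards [hmain] with t₁ ⟨ht₁, hlim₁⟩
  filter_upwards [hmain] with t₂ ⟨ht₂, hlim₂⟩
  have hmin : ∀ᶠ k in atTop, min t₁ t₂ - (ψ k).rOut ∈ I := by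
    refine (hψ.const_sub (min t₁ t₂)).eventually (hI.mem_nhds ?_)
    rw [sub_zero]
    exact min_rec (fun _ => ht₁) (fun _ => ht₂)
  have hmax : ∀ᶠ k in atTop, max t₁ t₂ + (ψ k).rOut ∈ I := by
    refine (hψ.const_add (max t₁ t₂)).eventually (hI.mem_nhds ?_)
    rw [add_zero]
    exact max_rec (fun _ => ht₁) (fun _ => ht₂)
  rw [abs_sub_comm]
  refine le_of_tendsto (hlim₁.sub hlim₂).abs ?_
  filter_upwards [hmin, hmax] with k hk₁ hk₂
  have hsupp := support_bumpInterval_subset (ψ k) t₁ t₂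
  have htest := h _ (contDiff_bumpInterval (ψ k) t₁ t₂)
    (.of_support_subset_isCompact isCompact_Icc hsupp)
    ((closure_minimal hsupp isClosed_Icc).trans (OrdConnected.out inferInstance hk₁ hk₂))
    (abs_bumpInterval_le_one (ψ k) t₁ t₂)
  simp only [deriv_bumpInterval, sub_mul] at htest
  rwa [integral_sub (integrableOn_normed_sub_mul hV (ψ k) t₁)
    (integrableOn_normed_sub_mul hV (ψ k) t₂)] at htest

end EssentialOscillation

section RadialCutoff

variable {E : Type*} [NormedAddCommGroup E]

/-- `ζ` is a smooth cutoff function that equals `1` on `closedBall x₀ a` and vanishes outside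
`ball x₀ b`, with gradient bounded by `L`. Since its values lie in `[0, 1]`, the gradient vanishes
outside the shell `ball x₀ b \ ball x₀ a`. -/
structure IsRadialCutoff [NormedSpace ℝ E] (x₀ : E) (a b L : ℝ) (ζ : E → ℝ) : Prop where
  contDiff : ContDiff ℝ ∞ ζ
  mem_Icc : ∀ x, ζ x ∈ Icc (0 : ℝ) 1
  eq_one : ∀ x ∈ closedBall x₀ a, ζ x = 1
  eq_zero : ∀ x ∉ ball x₀ b, ζ x = 0
  norm_fderiv_le : ∀ x, ‖fderiv ℝ ζ x‖ ≤ L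

lemma exists_isRadialCutoff [InnerProductSpace ℝ E] (x₀ : E) {a b c : ℝ} (ha : 0 < a)
    (hab : a < b) (hc : 1 < c) : ∃ ζ : E → ℝ, IsRadialCutoff x₀ a b (c / (b - a)) ζ := by
  obtain ⟨χ, hχ, hχI, hχ0, hχ1, hχL⟩ := exists_smooth_step hab hc
  have hone : ∀ x ∈ closedBall x₀ a, 1 - χ (dist x x₀) = 1 := fun x hx => by
    rw [hχ0 _ hx, sub_zero]
  refine ⟨fun x => 1 - χ (dist x x₀), contDiff_iff_contDiffAt.2 fun x => ?_,
    fun x => ⟨sub_nonneg.2 (hχI _).2, sub_le_self _ (hχI _).1⟩, hone,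
    fun x hx => by rw [hχ1 _ (not_lt.1 hx), sub_self], fun x => ?_⟩
  · rcases eq_or_ne x x₀ with rfl | hx
    · exact contDiffAt_const.congr_of_eventuallyEq
        (eventually_of_mem (closedBall_mem_nhds x ha) hone)
    · exact contDiffAt_const.sub
        (hχ.contDiffAt.comp x (contDiffAt_id.dist ℝ contDiffAt_const hx))
  · have hL := norm_fderiv_le_of_lipschitz ℝ (x₀ := x) (hχL.comp (LipschitzWith.dist_left x₀))
    rw [mul_one, Real.coe_toNNReal _ (div_nonneg (by linarith) (sub_nonneg.2 hab.le))] at hL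
    rwa [fderiv_const_sub, norm_neg]

namespace IsRadialCutoff

variable [NormedSpace ℝ E] {x₀ : E} {a b L : ℝ} {ζ : E → ℝ}

lemma fderiv_eq_zero (hζ : IsRadialCutoff x₀ a b L ζ) {x : E} (hx : x ∉ ball x₀ b \ ball x₀ a) :
    fderiv ℝ ζ x = 0 := by
  by_cases hxb : x ∈ ball x₀ b
  · have hxa : x ∈ closedBall x₀ a := ball_subset_closedBall (not_not.1 fun hxa => hx ⟨hxb, hxa⟩)
    exact IsLocalMax.fderiv_eq_zero
      (.of_forall fun y => (hζ.mem_Icc y).2.trans (hζ.eq_one x hxa).ge)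
  · exact IsLocalMin.fderiv_eq_zero
      (.of_forall fun y => (hζ.eq_zero x hxb).le.trans (hζ.mem_Icc y).1)

lemma tsupport_subset (hζ : IsRadialCutoff x₀ a b L ζ) : tsupport ζ ⊆ closedBall x₀ b :=
  closure_minimal (Function.support_subset_iff'.2 fun x hx =>
    hζ.eq_zero x fun hxb => hx (ball_subset_closedBall hxb)) isClosed_closedBall

lemma hasCompactSupport [ProperSpace E] (hζ : IsRadialCutoff x₀ a b L ζ) : HasCompactSupport ζ :=
  (isCompact_closedBall x₀ b).of_isClosed_subset (isClosed_tsupport ζ) hζ.tsupport_subset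

lemma setIntegral_norm_fderiv_mul_le [MeasurableSpace E] [BorelSpace E] {μ : Measure E}
    (hζ : IsRadialCutoff x₀ a b L ζ) (hab : a ≤ b) {ρ : ℝ} (hbρ : b ≤ ρ) {h : E → ℝ} (h0 : 0 ≤ h)
    (hh : IntegrableOn h (ball x₀ ρ) μ) :
    ∫ x in ball x₀ ρ, ‖fderiv ℝ ζ x‖ * h x ∂μ ≤
      L * ((∫ x in ball x₀ b, h x ∂μ) - ∫ x in ball x₀ a, h x ∂μ) := by
  have hshell : MeasurableSet (ball x₀ b \ ball x₀ a) := measurableSet_ball.diff measurableSet_ball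
  have hpt (x : E) :
      ‖fderiv ℝ ζ x‖ * h x ≤ L * (ball x₀ b \ ball x₀ a).indicator h x := by
    by_cases hx : x ∈ ball x₀ b \ ball x₀ a
    · rw [indicator_of_mem hx]
      exact mul_le_mul_of_nonneg_right (hζ.norm_fderiv_le x) (h0 x)
    · rw [hζ.fderiv_eq_zero hx, indicator_of_notMem hx, norm_zero, zero_mul, mul_zero]
  calc ∫ x in ball x₀ ρ, ‖fderiv ℝ ζ x‖ * h x ∂μ
      ≤ ∫ x in ball x₀ ρ, L * (ball x₀ b \ ball x₀ a).indicator h x ∂μ :=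
        integral_mono_of_nonneg (ae_of_all _ fun x => mul_nonneg (norm_nonneg _) (h0 x))
          ((Integrable.indicator hh hshell).const_mul L) (ae_of_all _ hpt)
    _ = L * ∫ x in ball x₀ b \ ball x₀ a, h x ∂μ := by
        rw [integral_const_mul, setIntegral_indicator hshell, inter_eq_self_of_subset_right
          (sdiff_subset.trans (ball_subset_ball hbρ))]
    _ = L * ((∫ x in ball x₀ b, h x ∂μ) - ∫ x in ball x₀ a, h x ∂μ) := by
        rw [setIntegral_sdiff measurableSet_ball (hh.mono_set (ball_subset_ball hbρ))
          (ball_subset_ball hab)]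

end IsRadialCutoff

lemma tendsto_isRadialCutoff [NormedSpace ℝ E] {x₀ : E} {ι : Type*} {l : Filter ι} {r : ℝ}
    {a b L : ι → ℝ} {ζ : ι → E → ℝ} (ha : Tendsto a l (𝓝 r)) (hb : Tendsto b l (𝓝 r))
    (hζ : ∀ i, IsRadialCutoff x₀ (a i) (b i) (L i) (ζ i)) {x : E} (hx : x ∉ sphere x₀ r) :
    Tendsto (fun i => ζ i x) l (𝓝 ((ball x₀ r).indicator 1 x)) := by
  refine tendsto_const_nhds.congr' ?_
  rcases lt_or_gt_of_ne (mt mem_sphere.2 hx) with hxr | hxr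
  · filter_upwards [ha.eventually (lt_mem_nhds hxr)] with i hi
    rw [indicator_of_mem (mem_ball.2 hxr), (hζ i).eq_one x (mem_closedBall.2 hi.le),
      Pi.one_apply]
  · filter_upwards [hb.eventually (gt_mem_nhds hxr)] with i hi
    rw [indicator_of_notMem (mt mem_ball.1 hxr.not_gt),
      (hζ i).eq_zero x (mt mem_ball.1 hi.not_gt)]

lemma tendsto_integral_isRadialCutoff_mul [NormedSpace ℝ E] [MeasurableSpace E]
    [OpensMeasurableSpace E] {ν : Measure E} {x₀ : E} {ι : Type*} {l : Filter ι}
    [l.IsCountablyGenerated] {r : ℝ} {a b L : ι → ℝ} {ζ : ι → E → ℝ} (ha : Tendsto a l (𝓝 r))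
    (hb : Tendsto b l (𝓝 r)) (hζ : ∀ i, IsRadialCutoff x₀ (a i) (b i) (L i) (ζ i)) {f : E → ℝ}
    (hf : Integrable f ν) (hr : ν (sphere x₀ r) = 0) :
    Tendsto (fun i => ∫ x, ζ i x * f x ∂ν) l (𝓝 (∫ x in ball x₀ r, f x ∂ν)) := by
  rw [← integral_indicator measurableSet_ball]
  refine tendsto_integral_filter_of_dominated_convergence (fun x => ‖f x‖)
    (.of_forall fun i =>
      (hζ i).contDiff.continuous.aestronglyMeasurable.mul hf.aestronglyMeasurable)
    (.of_forall fun i => ae_of_all _ fun x => ?_) hf.norm ?_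
  · rw [norm_mul, Real.norm_of_nonneg ((hζ i).mem_Icc x).1]
    exact mul_le_of_le_one_left (norm_nonneg _) ((hζ i).mem_Icc x).2
  · filter_upwards [measure_eq_zero_iff_ae_notMem.1 hr] with x hx
    simpa only [← indicator_mul_left, Pi.one_apply, one_mul] using
      (tendsto_isRadialCutoff ha hb hζ hx).mul_const (f x)

end RadialCutoff

section SecantSlope

/-- A mean value theorem without differentiability: the inequality holds for all `s` on one side
of a local extremum `r` of `G` minus its chord. -/
lemma exists_frequently_slope_le {G : ℝ → ℝ} {α β : ℝ} (hαβ : α < β)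
    (hG : ContinuousOn G (Icc α β)) :
    ∃ r ∈ Ioo α β, ∃ᶠ s in 𝓝[≠] r, slope G r s ≤ slope G α β := by
  set M := slope G α β
  have hends : G α - M * α = G β - M * β := by
    have := sub_smul_slope G α β
    rw [smul_eq_mul, vsub_eq_sub] at this
    linarith
  obtain ⟨r, hr, hmin | hmax⟩ := exists_isLocalExtr_Ioo (f := fun s => G s - M * s) hαβ
    (hG.sub (by fun_prop)) hends
  · have hleft : ∀ᶠ s in 𝓝[<] r, slope G r s ≤ M := by
      filter_upwards [hmin.filter_mono nhdsWithin_le_nhds, self_mem_nhdsWithin] with s hs hsr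
      rw [slope_def_field, div_le_iff_of_neg (sub_neg.2 hsr)]
      linarith
    exact ⟨r, hr, hleft.frequently.filter_mono (nhdsWithin_mono r fun s hs => ne_of_lt hs)⟩
  · have hright : ∀ᶠ s in 𝓝[>] r, slope G r s ≤ M := by
      filter_upwards [hmax.filter_mono nhdsWithin_le_nhds, self_mem_nhdsWithin] with s hs hsr
      rw [slope_def_field, div_le_iff₀ (sub_pos.2 hsr)]
      linarith
    exact ⟨r, hr, hright.frequently.filter_mono (nhdsWithin_mono r fun s hs => ne_of_gt hs)⟩

lemma exists_seq_slope_le {G : ℝ → ℝ} {α β : ℝ} (hαβ : α < β) (hG : ContinuousOn G (Icc α β)) :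
    ∃ r ∈ Ioo α β, ∃ a b : ℕ → ℝ, Tendsto a atTop (𝓝 r) ∧ Tendsto b atTop (𝓝 r) ∧
      ∀ k, α < a k ∧ a k < b k ∧ b k < β ∧ slope G (a k) (b k) ≤ slope G α β := by
  obtain ⟨r, hr, hfreq⟩ := exists_frequently_slope_le hαβ hG
  obtain ⟨s, hs, hsk⟩ := exists_seq_forall_of_frequently (hfreq.and_eventually
    (eventually_mem_nhdsWithin.and (mem_nhdsWithin_of_mem_nhds (Ioo_mem_nhds hr.1 hr.2))))
  have hsr : Tendsto s atTop (𝓝 r) := hs.mono_right nhdsWithin_le_nhds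
  refine ⟨r, hr, fun k => min r (s k), fun k => max r (s k), ?_, ?_, fun k => ?_⟩
  · simpa only [min_self] using (tendsto_const_nhds (x := r)).min hsr
  · simpa only [max_self] using (tendsto_const_nhds (x := r)).max hsr
  · obtain ⟨hslope, hne, hmem⟩ := hsk k
    refine ⟨lt_min hr.1 hmem.1, min_lt_max.2 (Ne.symm hne), max_lt hr.2 hmem.2, ?_⟩
    rcases le_total r (s k) with h | h
    · simpa only [min_eq_left h, max_eq_right h] using hslope
    · simpa only [min_eq_right h, max_eq_left h, slope_comm G (s k)] using hslope

end SecantSlope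

section OptimalRadius

lemma continuousAt_setIntegral_ball {X : Type*} [PseudoMetricSpace X] [MeasurableSpace X]
    [OpensMeasurableSpace X] {μ : Measure X} {f : X → ℝ} (hf : Integrable f μ) {x₀ : X} {s : ℝ}
    (hs : μ (sphere x₀ s) = 0) : ContinuousAt (fun s => ∫ x in ball x₀ s, f x ∂μ) s := by
  simp_rw [← integral_indicator measurableSet_ball]
  refine continuousAt_of_dominated
    (Eventually.of_forall fun r => hf.aestronglyMeasurable.indicator measurableSet_ball)
    (Eventually.of_forall fun r => ae_of_all _ fun x => norm_indicator_le_norm_self _ _)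
    hf.norm ?_
  filter_upwards [measure_eq_zero_iff_ae_notMem.1 hs] with x hx
  rcases lt_or_gt_of_ne (mt mem_sphere.2 hx) with h | h
  · refine continuousAt_const.congr (f := fun _ => f x) ?_
    filter_upwards [lt_mem_nhds h] with r hr
    rw [indicator_of_mem (mem_ball.2 hr)]
  · refine continuousAt_const.congr (f := fun _ => 0) ?_
    filter_upwards [gt_mem_nhds h] with r hr
    rw [indicator_of_notMem (mt mem_ball.1 hr.not_gt)]

variable {E : Type*} [NormedAddCommGroup E] [InnerProductSpace ℝ E] [FiniteDimensional ℝ E]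
  [MeasurableSpace E] [BorelSpace E] {μ : Measure E} [μ.IsAddHaarMeasure]

lemma continuousOn_setIntegral_ball {x₀ : E} {σ ρ : ℝ} (hσ : 0 < σ) {h : E → ℝ}
    (hh : IntegrableOn h (ball x₀ ρ) μ) :
    ContinuousOn (fun s => ∫ x in ball x₀ s, h x ∂μ) (Icc σ ρ) := by
  have hcont : ContinuousOn (fun s => ∫ x in ball x₀ s, h x ∂μ.restrict (ball x₀ ρ)) (Icc σ ρ) :=
    fun s hs => (continuousAt_setIntegral_ball hh (Measure.absolutelyContinuous_of_le
      Measure.restrict_le_self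
      (Measure.addHaar_sphere_of_ne_zero μ x₀ (hσ.trans_le hs.1).ne'))).continuousWithinAt
  refine hcont.congr fun s hs => ?_
  simp only [Measure.restrict_restrict_of_subset (ball_subset_ball hs.2)]

/-- The factor `1 + 1 / (k + 1)` absorbs the loss in the gradient bound of a smooth cutoff. -/
lemma exists_radius_seq_isRadialCutoff (x₀ : E) {σ ρ : ℝ} (hσ : 0 < σ) (hσρ : σ < ρ)
    {h : E → ℝ} (h0 : 0 ≤ h) (hh : IntegrableOn h (ball x₀ ρ) μ) :
    ∃ r ∈ Ioo σ ρ, ∃ a b L : ℕ → ℝ, ∃ ζ : ℕ → E → ℝ,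
      Tendsto a atTop (𝓝 r) ∧ Tendsto b atTop (𝓝 r) ∧ ∀ k, b k < ρ ∧
        IsRadialCutoff x₀ (a k) (b k) (L k) (ζ k) ∧
        ∫ x in ball x₀ ρ, ‖fderiv ℝ (ζ k) x‖ * h x ∂μ ≤
          (1 + 1 / (k + 1)) * ((ρ - σ)⁻¹ * ∫ x in ball x₀ ρ, h x ∂μ) := by
  set G : ℝ → ℝ := fun s => ∫ x in ball x₀ s, h x ∂μ
  obtain ⟨r, hr, a, b, ha, hb, hab⟩ :=
    exists_seq_slope_le hσρ (continuousOn_setIntegral_ball hσ hh)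
  have hκ (k : ℕ) : (1 : ℝ) < 1 + 1 / (k + 1) := lt_add_of_pos_right 1 (by positivity)
  choose ζ hζ using fun k =>
    exists_isRadialCutoff x₀ (hσ.trans (hab k).1) (hab k).2.1 (hκ k)
  refine ⟨r, hr, a, b, _, ζ, ha, hb, fun k => ⟨(hab k).2.2.1, hζ k, ?_⟩⟩
  obtain ⟨-, hlt, hbρ, hslope⟩ := hab k
  have hGσ : 0 ≤ G σ := integral_nonneg h0
  calc ∫ x in ball x₀ ρ, ‖fderiv ℝ (ζ k) x‖ * h x ∂μ
      ≤ (1 + 1 / (k + 1)) / (b k - a k) * (G (b k) - G (a k)) :=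
        (hζ k).setIntegral_norm_fderiv_mul_le hlt.le hbρ.le h0 hh
    _ = (1 + 1 / (k + 1)) * slope G (a k) (b k) := by rw [slope_def_field]; ring
    _ ≤ (1 + 1 / (k + 1)) * slope G σ ρ := by gcongr
    _ = (1 + 1 / (k + 1)) * ((ρ - σ)⁻¹ * (G ρ - G σ)) := by rw [slope_def_field]; ring
    _ ≤ (1 + 1 / (k + 1)) * ((ρ - σ)⁻¹ * G ρ) := by
        have := inv_nonneg.2 (sub_nonneg.2 hσρ.le)
        gcongr
        exact sub_le_self _ hGσ

end OptimalRadius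

section DivergenceEquation

variable {E : Type*} [NormedAddCommGroup E] [MeasurableSpace E]

lemma integrable_norm_fderiv_mul [NormedSpace ℝ E] [OpensMeasurableSpace E] {μ : Measure E}
    [SFinite μ] {I : Set ℝ} {Ω : Set E} {F : ℝ → E → E} {ζ : E → ℝ}
    (hF : IntegrableOn (fun q : ℝ × E => ‖F q.1 q.2‖) (I ×ˢ Ω) (volume.prod μ))
    (hζ : ContDiff ℝ ∞ ζ) (hζc : HasCompactSupport ζ) :
    Integrable (fun q : ℝ × E => ‖fderiv ℝ ζ q.2‖ * ‖F q.1 q.2‖)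
      ((volume.restrict I).prod (μ.restrict Ω)) := by
  obtain ⟨C, hC⟩ := (hζ.continuous_fderiv (by simp)).bounded_above_of_compact_support
    (hζc.fderiv ℝ)
  rw [IntegrableOn, ← Measure.prod_restrict] at hF
  refine hF.bdd_mul ?_ (ae_of_all _ fun q => (norm_norm _).trans_le (hC q.2))
  exact ((hζ.continuous_fderiv (by simp)).norm.comp continuous_snd).aestronglyMeasurable

/-- The equation `∂_t u = div F` on `I ×ˢ Ω` in the sense of distributions, with respect to the
measure `μ` in space. The term `F · ∇φ` is written as the derivative of `φ t` in the direction
`F t x`. -/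
def IsDistribSolution [NormedSpace ℝ E] (μ : Measure E) (I : Set ℝ) (Ω : Set E)
    (u : ℝ → E → ℝ) (F : ℝ → E → E) : Prop :=
  ∀ φ : ℝ → E → ℝ, ContDiff ℝ ∞ (fun q : ℝ × E => φ q.1 q.2) →
    HasCompactSupport (fun q : ℝ × E => φ q.1 q.2) →
    tsupport (fun q : ℝ × E => φ q.1 q.2) ⊆ I ×ˢ Ω →
      ∫ t in I, ∫ x in Ω, u t x * deriv (fun s => φ s x) t ∂μ
        = ∫ t in I, ∫ x in Ω, fderiv ℝ (φ t) x (F t x) ∂μ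

namespace IsDistribSolution

variable {μ : Measure E} {I : Set ℝ} {u : ℝ → E → ℝ} {F : ℝ → E → E}

section Testing

variable [NormedSpace ℝ E] {Ω : Set E} {ζ : E → ℝ}

lemma integral_deriv_mul_integral_mul (h : IsDistribSolution μ I Ω u F) {η : ℝ → ℝ}
    (hη : ContDiff ℝ ∞ η) (hηc : HasCompactSupport η) (hηI : tsupport η ⊆ I)
    (hζ : ContDiff ℝ ∞ ζ) (hζc : HasCompactSupport ζ) (hζΩ : tsupport ζ ⊆ Ω) :
    ∫ t in I, deriv η t * ∫ x in Ω, ζ x * u t x ∂μ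
      = ∫ t in I, η t * ∫ x in Ω, fderiv ℝ ζ x (F t x) ∂μ := by
  have hsupp : Function.support (fun q : ℝ × E => η q.1 * ζ q.2) ⊆ tsupport η ×ˢ tsupport ζ :=
    fun q hq => ⟨subset_tsupport η (left_ne_zero_of_mul hq),
      subset_tsupport ζ (right_ne_zero_of_mul hq)⟩
  have hcompact : IsCompact (tsupport η ×ˢ tsupport ζ) := hηc.isCompact.prod hζc.isCompact
  have heq := h (fun t x => η t * ζ x) ((hη.comp contDiff_fst).mul (hζ.comp contDiff_snd))
    (.of_support_subset_isCompact hcompact hsupp)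
    ((closure_minimal hsupp hcompact.isClosed).trans (prod_mono hηI hζΩ))
  have hfderiv (t : ℝ) (x : E) : fderiv ℝ (fun x => η t * ζ x) x = η t • fderiv ℝ ζ x :=
    fderiv_const_mul (hζ.differentiable (by simp) x) (η t)
  simp only [deriv_mul_const_field, hfderiv, smul_apply, smul_eq_mul, integral_const_mul] at heq
  rw [← heq]
  simp only [← integral_const_mul]
  congr! 4
  ring

lemma abs_integral_deriv_mul_le [OpensMeasurableSpace E] [SFinite μ]
    (h : IsDistribSolution μ I Ω u F)
    (hF : IntegrableOn (fun q : ℝ × E => ‖F q.1 q.2‖) (I ×ˢ Ω) (volume.prod μ)) {η : ℝ → ℝ}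
    (hη : ContDiff ℝ ∞ η) (hηc : HasCompactSupport η) (hηI : tsupport η ⊆ I)
    (hη1 : ∀ t, |η t| ≤ 1)
    (hζ : ContDiff ℝ ∞ ζ) (hζc : HasCompactSupport ζ) (hζΩ : tsupport ζ ⊆ Ω) :
    |∫ t in I, deriv η t * ∫ x in Ω, ζ x * u t x ∂μ| ≤
      ∫ x in Ω, ‖fderiv ℝ ζ x‖ * (∫ t in I, ‖F t x‖) ∂μ := by
  have hint := integrable_norm_fderiv_mul hF hζ hζc
  have hswap : ∫ x in Ω, ‖fderiv ℝ ζ x‖ * (∫ t in I, ‖F t x‖) ∂μ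
      = ∫ t in I, ∫ x in Ω, ‖fderiv ℝ ζ x‖ * ‖F t x‖ ∂μ := by
    simp only [← integral_const_mul]
    exact (integral_integral_swap (f := fun t x => ‖fderiv ℝ ζ x‖ * ‖F t x‖) hint).symm
  rw [hswap, h.integral_deriv_mul_integral_mul hη hηc hηI hζ hζc hζΩ, ← Real.norm_eq_abs]
  refine norm_integral_le_of_norm_le hint.integral_prod_left ?_
  filter_upwards [hint.prod_right_ae] with t ht
  calc ‖η t * ∫ x in Ω, fderiv ℝ ζ x (F t x) ∂μ‖
      ≤ ‖∫ x in Ω, fderiv ℝ ζ x (F t x) ∂μ‖ := by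
        rw [norm_mul]
        exact mul_le_of_le_one_left (norm_nonneg _) (hη1 t)
    _ ≤ ∫ x in Ω, ‖fderiv ℝ ζ x‖ * ‖F t x‖ ∂μ :=
        norm_integral_le_of_norm_le ht (ae_of_all _ fun x => (fderiv ℝ ζ x).le_opNorm (F t x))

lemma ae_ae_abs_integral_mul_sub_le [OpensMeasurableSpace E] [SFinite μ]
    (h : IsDistribSolution μ I Ω u F) (hI : IsOpen I) [I.OrdConnected]
    (hu : IntegrableOn (fun q : ℝ × E => u q.1 q.2) (I ×ˢ Ω) (volume.prod μ))
    (hF : IntegrableOn (fun q : ℝ × E => ‖F q.1 q.2‖) (I ×ˢ Ω) (volume.prod μ))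
    (hζ : ContDiff ℝ ∞ ζ) (hζc : HasCompactSupport ζ) (hζΩ : tsupport ζ ⊆ Ω) :
    ∀ᵐ t₁ ∂(volume.restrict I), ∀ᵐ t₂ ∂(volume.restrict I),
      |(∫ x in Ω, ζ x * u t₂ x ∂μ) - ∫ x in Ω, ζ x * u t₁ x ∂μ| ≤
        ∫ x in Ω, ‖fderiv ℝ ζ x‖ * (∫ t in I, ‖F t x‖) ∂μ := by
  obtain ⟨C, hC⟩ := hζ.continuous.bounded_above_of_compact_support hζc
  have hζu : Integrable (fun q : ℝ × E => ζ q.2 * u q.1 q.2)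
      ((volume.restrict I).prod (μ.restrict Ω)) := by
    rw [IntegrableOn, ← Measure.prod_restrict] at hu
    exact hu.bdd_mul (hζ.continuous.comp continuous_snd).aestronglyMeasurable
      (ae_of_all _ fun q => hC q.2)
  exact ae_ae_abs_sub_le_of_forall_abs_integral_deriv_mul_le hI hζu.integral_prod_left
    fun η hη hηc hηI hη1 => h.abs_integral_deriv_mul_le hF hη hηc hηI hη1 hζ hζc hζΩ

end Testing

variable [InnerProductSpace ℝ E] [FiniteDimensional ℝ E] [BorelSpace E] [μ.IsAddHaarMeasure]
  {x₀ : E} {σ ρ : ℝ}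

theorem exists_radius_ae_ae_abs_setIntegral_sub_le (hI : IsOpen I) [I.OrdConnected]
    (hσ : 0 < σ) (hσρ : σ < ρ) (h : IsDistribSolution μ I (ball x₀ ρ) u F)
    (hu : IntegrableOn (fun q : ℝ × E => u q.1 q.2) (I ×ˢ ball x₀ ρ) (volume.prod μ))
    (hF : IntegrableOn (fun q : ℝ × E => ‖F q.1 q.2‖) (I ×ˢ ball x₀ ρ) (volume.prod μ)) :
    ∃ r ∈ Ioo σ ρ, ∀ᵐ t₁ ∂(volume.restrict I), ∀ᵐ t₂ ∂(volume.restrict I),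
      |(∫ x in ball x₀ r, u t₂ x ∂μ) - ∫ x in ball x₀ r, u t₁ x ∂μ| ≤
        (ρ - σ)⁻¹ * ∫ q in I ×ˢ ball x₀ ρ, ‖F q.1 q.2‖ ∂(volume.prod μ) := by
  have hu' := hu
  have hF' := hF
  rw [IntegrableOn, ← Measure.prod_restrict] at hu' hF'
  obtain ⟨r, hr, a, b, L, ζ, ha, hb, hζ⟩ := exists_radius_seq_isRadialCutoff (μ := μ) x₀ hσ hσρ
    (fun x => integral_nonneg fun t => norm_nonneg (F t x)) hF'.integral_prod_right
  have hflux : ∫ x in ball x₀ ρ, (∫ t in I, ‖F t x‖) ∂μ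
      = ∫ q in I ×ˢ ball x₀ ρ, ‖F q.1 q.2‖ ∂(volume.prod μ) := by
    rw [← Measure.prod_restrict, integral_prod_symm _ hF']
  rw [hflux] at hζ
  have hosc (k : ℕ) := h.ae_ae_abs_integral_mul_sub_le hI hu hF (hζ k).2.1.contDiff
    (hζ k).2.1.hasCompactSupport
    ((hζ k).2.1.tsupport_subset.trans (closedBall_subset_ball (hζ k).1))
  have hsphere : μ.restrict (ball x₀ ρ) (sphere x₀ r) = 0 :=
    Measure.absolutelyContinuous_of_le Measure.restrict_le_self
      (Measure.addHaar_sphere_of_ne_zero μ x₀ (hσ.trans hr.1).ne')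
  have hlim {t : ℝ} (ht : Integrable (u t) (μ.restrict (ball x₀ ρ))) :
      Tendsto (fun k => ∫ x in ball x₀ ρ, ζ k x * u t x ∂μ) atTop
        (𝓝 (∫ x in ball x₀ r, u t x ∂μ)) := by
    rw [← Measure.restrict_restrict_of_subset (ball_subset_ball hr.2.le)]
    exact tendsto_integral_isRadialCutoff_mul ha hb (fun k => (hζ k).2.1) ht hsphere
  have hbound (M : ℝ) : Tendsto (fun k : ℕ => (1 + 1 / ((k : ℝ) + 1)) * M) atTop (𝓝 M) := by
    simpa only [add_zero, one_mul] using
      (tendsto_one_div_add_atTop_nhds_zero_nat.const_add 1).mul_const M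
  refine ⟨r, hr, ?_⟩
  filter_upwards [ae_all_iff.2 hosc, hu'.prod_right_ae] with t₁ h₁ ht₁
  filter_upwards [ae_all_iff.2 h₁, hu'.prod_right_ae] with t₂ h₂ ht₂
  exact le_of_tendsto_of_tendsto' ((hlim ht₂).sub (hlim ht₁)).abs (hbound _)
    fun k => (h₂ k).trans (hζ k).2.2

end IsDistribSolution

end DivergenceEquation

section MeanValues

variable {E : Type*} [NormedAddCommGroup E] [MeasurableSpace E] [BorelSpace E]

lemma measureReal_ball_eq_div_pow_mul [NormedSpace ℝ E] [FiniteDimensional ℝ E] (μ : Measure E)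
    [μ.IsAddHaarMeasure] (x₀ : E) {σ ρ : ℝ} (hσ : 0 < σ) (hρ : 0 < ρ) :
    μ.real (ball x₀ ρ) = (ρ / σ) ^ Module.finrank ℝ E * μ.real (ball x₀ σ) := by
  have hscale := Measure.addHaar_ball_mul_of_pos μ x₀ (div_pos hρ hσ) σ
  rw [div_mul_cancel₀ _ hσ.ne', ← Measure.addHaar_ball_center μ x₀ σ] at hscale
  rw [measureReal_def, hscale, ENNReal.toReal_mul, ENNReal.toReal_ofReal (by positivity),
    measureReal_def]

variable [InnerProductSpace ℝ E] [FiniteDimensional ℝ E] {μ : Measure E} [μ.IsAddHaarMeasure]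

theorem gluing_lemma_general {c d : ℝ} {x₀ : E} {σ ρ : ℝ} (hσ : 0 < σ) (hσρ : σ < ρ)
    {u : ℝ → E → ℝ} {F : ℝ → E → E} (h : IsDistribSolution μ (Ioo c d) (ball x₀ ρ) u F)
    (hu : IntegrableOn (fun q : ℝ × E => u q.1 q.2) (Ioo c d ×ˢ ball x₀ ρ) (volume.prod μ))
    (hF : IntegrableOn (fun q : ℝ × E => ‖F q.1 q.2‖) (Ioo c d ×ˢ ball x₀ ρ) (volume.prod μ)) :
    ∃ r ∈ Ioo σ ρ,
      ∀ᵐ t₁ ∂(volume.restrict (Ioo c d)), ∀ᵐ t₂ ∂(volume.restrict (Ioo c d)),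
        |(⨍ x in ball x₀ r, u t₂ x ∂μ) - ⨍ x in ball x₀ r, u t₁ x ∂μ| ≤
          (ρ / σ) ^ Module.finrank ℝ E * ((d - c) / (ρ - σ)) *
            ⨍ q in Ioo c d ×ˢ ball x₀ ρ, ‖F q.1 q.2‖ ∂(volume.prod μ) := by
  obtain ⟨r, hr, hosc⟩ := h.exists_radius_ae_ae_abs_setIntegral_sub_le isOpen_Ioo hσ hσρ hu hF
  refine ⟨r, hr, ?_⟩
  have hρ : 0 < ρ := hσ.trans hσρ
  have hball : 0 < μ.real (ball x₀ σ) :=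
    ENNReal.toReal_pos (measure_ball_pos μ x₀ hσ).ne' measure_ball_lt_top.ne
  filter_upwards [hosc, ae_restrict_mem measurableSet_Ioo] with t₁ h₁ ht₁
  filter_upwards [h₁] with t₂ h₂
  have hcd : 0 < d - c := sub_pos.2 (ht₁.1.trans ht₁.2)
  simp only [setAverage_eq, smul_eq_mul]
  set J := ∫ q in Ioo c d ×ˢ ball x₀ ρ, ‖F q.1 q.2‖ ∂(volume.prod μ)
  calc |(μ.real (ball x₀ r))⁻¹ * (∫ x in ball x₀ r, u t₂ x ∂μ)
        - (μ.real (ball x₀ r))⁻¹ * ∫ x in ball x₀ r, u t₁ x ∂μ|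
      = (μ.real (ball x₀ r))⁻¹ *
          |(∫ x in ball x₀ r, u t₂ x ∂μ) - ∫ x in ball x₀ r, u t₁ x ∂μ| := by
        rw [← mul_sub, abs_mul, abs_of_nonneg (by positivity)]
    _ ≤ (μ.real (ball x₀ σ))⁻¹ * ((ρ - σ)⁻¹ * J) := by
        gcongr
        · exact measure_ball_lt_top.ne
        · exact hr.1.le
    _ = (ρ / σ) ^ Module.finrank ℝ E * ((d - c) / (ρ - σ)) *
          (((volume.prod μ).real (Ioo c d ×ˢ ball x₀ ρ))⁻¹ * J) := by
        rw [measureReal_prod_prod, Real.volume_real_Ioo_of_le (sub_nonneg.1 hcd.le),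
          measureReal_ball_eq_div_pow_mul μ x₀ hσ hρ]
        field_simp

end MeanValues

lemma div_half_pow_mul_div_eq {t₀ ρ : ℝ} (hρ : 0 < ρ) (p : ℝ) (n : ℕ) :
    (ρ / (ρ / 2)) ^ n * ((t₀ + ρ ^ p - (t₀ - ρ ^ p)) / (ρ - ρ / 2)) =
      2 ^ (n + 2) * ρ ^ (p - 1) := by
  rw [div_div_cancel₀ hρ.ne', sub_half, add_sub_sub_cancel, Real.rpow_sub_one hρ.ne', pow_add]
  field_simp
  ring

/-- Gluing lemma: if `∂_t u = div F` distributionally in the parabolic cylinder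
`Q_ρ(z₀) = B_ρ(x₀) × (t₀-ρ^p, t₀+ρ^p)` with `u, F ∈ L¹(Q_ρ(z₀))`, then there is a
radius `ρh ∈ (ρ/2, ρ)` such that for a.e. `t₁, t₂` the spatial means over `B_ρh(x₀)`
satisfy `|(u)_{x₀,ρh}(t₂) − (u)_{x₀,ρh}(t₁)| ≤ 2^{n+2} ρ^{p-1} ⨍⨍_{Q_ρ(z₀)} |F|`. -/
theorem gluing_lemma (n : ℕ) (hn : 1 ≤ n) (p : ℝ) (hp : 1 < p)
    (x₀ : EuclideanSpace ℝ (Fin n)) (t₀ ρ : ℝ) (hρ : 0 < ρ)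
    (Λ : Set ℝ) (hΛ : Λ = Ioo (t₀ - ρ ^ p) (t₀ + ρ ^ p))
    (Q : Set (ℝ × EuclideanSpace ℝ (Fin n))) (hQ : Q = Λ ×ˢ ball x₀ ρ)
    (u : ℝ → EuclideanSpace ℝ (Fin n) → ℝ)
    (F : ℝ → EuclideanSpace ℝ (Fin n) → EuclideanSpace ℝ (Fin n))
    (hu : IntegrableOn (fun q : ℝ × EuclideanSpace ℝ (Fin n) => u q.1 q.2) Q)
    (hF : IntegrableOn (fun q : ℝ × EuclideanSpace ℝ (Fin n) => ‖F q.1 q.2‖) Q)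
    (heq : ∀ φ : ℝ → EuclideanSpace ℝ (Fin n) → ℝ, IsTestFun (ball x₀ ρ) Λ φ →
      ∫ t in Λ, ∫ x in ball x₀ ρ, u t x * deriv (fun s => φ s x) t
        = ∫ t in Λ, ∫ x in ball x₀ ρ, fderiv ℝ (φ t) x (F t x)) :
    ∃ ρh ∈ Ioo (ρ / 2) ρ,
      ∀ᵐ t₁ ∂(volume.restrict Λ), ∀ᵐ t₂ ∂(volume.restrict Λ),
        |(volume (ball x₀ ρh)).toReal⁻¹ * (∫ x in ball x₀ ρh, u t₂ x)
          - (volume (ball x₀ ρh)).toReal⁻¹ * (∫ x in ball x₀ ρh, u t₁ x)|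
          ≤ 2 ^ (n + 2) * ρ ^ (p - 1) *
              ((volume Q).toReal⁻¹ * ∫ q in Q, ‖F q.1 q.2‖) := by
  subst hΛ hQ
  simpa only [Measure.volume_eq_prod, setAverage_eq, smul_eq_mul, measureReal_def,
    div_half_pow_mul_div_eq hρ, finrank_euclideanSpace_fin] using
      gluing_lemma_general (half_pos hρ) (half_lt_self hρ)
        (fun φ hφ hφc hφQ => heq φ ⟨hφ, hφc, hφQ⟩) hu hF
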